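/- $\sum_{n=1}^{\infty} \frac{(3n-1)\,16^n}{n^3 \binom{2n}{n}^3}\left(H_{2n-1}^{(2)} - \frac{5}{4} H_{n-1}^{(2)}\right) = \frac{\pi^4}{24}$. -/

import Mathlib

open Filter Topology

/-- Generalized harmonic number `H_n^{(s)} = ∑_{k=1}^n 1/k^s`. -/
noncomputable def H (s n : ℕ) : ℝ := ∑ k ∈ Finset.range n, 1 / ((k:ℝ) + 1) ^ s

/-! Let `A n x t = ∏_{1≤j≤n} (j² - 4t) / (C(2n,n) ∏_{0≤j≤n} ((x + j)² - t))`. The pair formed by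
`A n (x + k) t` and its multiple by `(2(x + k) + 3n + 1) / (2(2n + 1))` satisfies the
Wilf–Zeilberger relation, which gives
`∑ₙ A n x t (2x + 3n + 1) / (2(2n + 1)) = ∑ₖ 1 / ((x + k)² - t)`.
Taking coefficients of `t` produces another WZ pair, whose row `n = 0` is `1 / (x + k)⁴` and whose
terms carry the logarithmic derivative `∑_{j≤n} 1 / (x + j)² - 4 H_n^{(2)}`. At `x = 1/2` the
Pochhammer products become central binomial coefficients and the right-hand side is
`16 ∑ₖ 1 / (2k + 1)⁴ = π⁴ / 6`, four times the claim. -/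

open Finset
open scoped Nat

section WZPair

variable {E : Type*} [AddCommGroup E] [TopologicalSpace E] [IsTopologicalAddGroup E] [T2Space E]

theorem tendsto_sum_of_wz_pair {F G : ℕ → ℕ → E} {s : ℕ → E}
    (hwz : ∀ n k, F n k - F (n + 1) k = G n k - G n (k + 1))
    (hF : ∀ n, Tendsto (fun K ↦ ∑ k ∈ range K, F n k) atTop (𝓝 (s n)))
    (hG : ∀ n, Tendsto (G n) atTop (𝓝 0)) (hs : Tendsto s atTop (𝓝 0)) :
    Tendsto (fun N ↦ ∑ n ∈ range N, G n 0) atTop (𝓝 (s 0)) := by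
  have boundary_eq (n : ℕ) : G n 0 = s n - s (n + 1) := by
    have h_rows := (hF n).sub (hF (n + 1))
    simp only [← sum_sub_distrib, hwz, sum_range_sub'] at h_rows
    have h_boundary : Tendsto (fun K ↦ G n 0 - G n K) atTop (𝓝 (G n 0)) := by
      simpa using (hG n).const_sub (G n 0)
    exact tendsto_nhds_unique h_boundary h_rows
  simp only [boundary_eq, sum_range_sub']
  simpa using hs.const_sub (s 0)

end WZPair

/-- The hypergeometric factor `n!² / (C(2n,n) (x)ₙ₊₁²)` of the WZ pair, where `(x)ₙ` is the rising
factorial. -/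
noncomputable def wzWeight (n : ℕ) (x : ℝ) : ℝ :=
  (n ! : ℝ) ^ 2 / (n.centralBinom * (ascPochhammer ℝ (n + 1)).eval x ^ 2)

/-- The harmonic factor `∑_{j≤n} 1 / (x + j)² - 4 H_n^{(2)}` of the WZ pair. -/
noncomputable def wzHarmonic (n : ℕ) (x : ℝ) : ℝ :=
  ∑ j ∈ range (n + 1), 1 / (x + j) ^ 2 - 4 * H 2 n

/-- The first member of the WZ pair; the second index `k` of the pair is absorbed into the
parameter as `x + k`. -/
noncomputable def wzTerm (n : ℕ) (x : ℝ) : ℝ :=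
  wzWeight n x * wzHarmonic n x

/-- The second member of the WZ pair (the WZ mate of `wzTerm`). -/
noncomputable def wzMate (n : ℕ) (x : ℝ) : ℝ :=
  (2 * x + 3 * n + 1) / (2 * (2 * n + 1)) * wzTerm n x

section Recurrences

variable {x : ℝ}

lemma H_succ (s n : ℕ) : H s (n + 1) = H s n + 1 / ((n : ℝ) + 1) ^ s :=
  sum_range_succ _ n

lemma cast_centralBinom_succ {K : Type*} [Field K] [CharZero K] (n : ℕ) :
    ((n + 1).centralBinom : K) = 2 * (2 * n + 1) / (n + 1) * n.centralBinom := by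
  have h : ((n : K) + 1) * (n + 1).centralBinom = 2 * (2 * n + 1) * n.centralBinom := by
    exact_mod_cast n.succ_mul_centralBinom_succ
  have h_ne : (n : K) + 1 ≠ 0 := n.cast_add_one_ne_zero
  field_simp
  linear_combination h

lemma ascPochhammer_eval_add_one {R : Type*} [CommSemiring R] (n : ℕ) (y : R) :
    y * (ascPochhammer R n).eval (y + 1) = (ascPochhammer R n).eval y * (y + n) := by
  rw [← ascPochhammer_succ_eval, ascPochhammer_succ_left]
  simp

lemma wzWeight_succ (n : ℕ) (x : ℝ) :
    wzWeight (n + 1) x =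
      wzWeight n x * ((n + 1) ^ 3 / (2 * (2 * n + 1) * (x + n + 1) ^ 2)) := by
  simp only [wzWeight, cast_centralBinom_succ, ascPochhammer_succ_eval (n + 1), Nat.factorial_succ]
  push_cast
  rw [← add_assoc]
  field_simp

lemma wzWeight_add_one (n : ℕ) (hx : 0 < x) :
    wzWeight n (x + 1) = wzWeight n x * (x ^ 2 / (x + n + 1) ^ 2) := by
  have h_shift : (ascPochhammer ℝ (n + 1)).eval (x + 1) =
      (ascPochhammer ℝ (n + 1)).eval x * (x + n + 1) / x := by
    have h := ascPochhammer_eval_add_one (n + 1) x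
    push_cast at h
    field_simp
    linear_combination h
  rw [wzWeight, wzWeight, h_shift]
  field_simp

lemma wzHarmonic_succ (n : ℕ) (x : ℝ) :
    wzHarmonic (n + 1) x =
      wzHarmonic n x + 1 / (x + n + 1) ^ 2 - 4 / ((n : ℝ) + 1) ^ 2 := by
  rw [wzHarmonic, wzHarmonic, sum_range_succ _ (n + 1), H_succ]
  push_cast
  ring

lemma wzHarmonic_add_one (n : ℕ) (x : ℝ) :
    wzHarmonic n (x + 1) = wzHarmonic n x + 1 / (x + n + 1) ^ 2 - 1 / x ^ 2 := by
  have h_shift (j : ℕ) : x + 1 + j = x + (j + 1 : ℕ) := by push_cast; ring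
  have h_split := sum_range_succ (fun j : ℕ ↦ 1 / (x + j) ^ 2) (n + 1)
  rw [sum_range_succ'] at h_split
  simp only [wzHarmonic, h_shift]
  push_cast at h_split ⊢
  rw [add_zero, ← add_assoc] at h_split
  linear_combination h_split

theorem wzTerm_sub_wzTerm_succ (n : ℕ) (hx : 0 < x) :
    wzTerm n x - wzTerm (n + 1) x = wzMate n x - wzMate n (x + 1) := by
  simp only [wzMate, wzTerm, wzWeight_succ, wzHarmonic_succ, wzWeight_add_one n hx,
    wzHarmonic_add_one]
  field_simp
  ring

lemma wzTerm_zero (x : ℝ) : wzTerm 0 x = 1 / x ^ 4 := by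
  simp [wzTerm, wzWeight, wzHarmonic, H, ← mul_inv, ← pow_add]

end Recurrences

section Bounds

variable {x : ℝ}

lemma wzWeight_nonneg (n : ℕ) (x : ℝ) : 0 ≤ wzWeight n x := by
  unfold wzWeight
  positivity

lemma wzWeight_le (n : ℕ) (hx : 0 < x) : wzWeight n x ≤ (1 / 2) ^ n * (1 / x ^ 2) := by
  induction n with
  | zero => simp [wzWeight]
  | succ n ih =>
    have h_ratio : ((n : ℝ) + 1) ^ 3 / (2 * (2 * n + 1) * (x + n + 1) ^ 2) ≤ 1 / 2 := by
      have h_sq : ((n : ℝ) + 1) ^ 2 ≤ (x + n + 1) ^ 2 := by gcongr; linarith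
      have h_lin : (n : ℝ) + 1 ≤ 2 * n + 1 := by linarith [n.cast_nonneg (α := ℝ)]
      rw [div_le_div_iff₀ (by positivity) two_pos]
      nlinarith [mul_le_mul h_lin h_sq (by positivity) (by positivity)]
    calc wzWeight (n + 1) x
        ≤ (1 / 2) ^ n * (1 / x ^ 2) * (1 / 2) := by
          rw [wzWeight_succ]
          gcongr
      _ = (1 / 2) ^ (n + 1) * (1 / x ^ 2) := by ring

lemma abs_wzHarmonic_le (n : ℕ) (hx : 0 < x) : |wzHarmonic n x| ≤ 4 * n + 1 / x ^ 2 := by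
  have h_inv : 0 ≤ 1 / x ^ 2 := by positivity
  suffices -(4 * n : ℝ) ≤ wzHarmonic n x ∧ wzHarmonic n x ≤ 1 / x ^ 2 from
    abs_le.2 ⟨by linarith, by linarith [n.cast_nonneg (α := ℝ)]⟩
  induction n with
  | zero => simp [wzHarmonic, H, sq_nonneg]
  | succ n ih =>
    have h_small : 1 / ((n : ℝ) + 1) ^ 2 ≤ 1 :=
      (div_le_one (by positivity)).2 (one_le_pow₀ (by simp))
    have h_decr : 1 / (x + n + 1) ^ 2 ≤ 1 / ((n : ℝ) + 1) ^ 2 := by gcongr; linarith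
    have h_pos : 0 ≤ 1 / (x + n + 1) ^ 2 := by positivity
    have h_four : 4 / ((n : ℝ) + 1) ^ 2 = 4 * (1 / ((n : ℝ) + 1) ^ 2) := by ring
    rw [wzHarmonic_succ, h_four]
    push_cast
    constructor <;> linarith [ih.1, ih.2]

lemma abs_wzTerm_le (n : ℕ) (hx : 0 < x) :
    |wzTerm n x| ≤ (1 / 2) ^ n * (4 * n + 1 / x ^ 2) * (1 / x ^ 2) := by
  rw [wzTerm, abs_mul, abs_of_nonneg (wzWeight_nonneg n x), mul_right_comm]
  exact mul_le_mul (wzWeight_le n hx) (abs_wzHarmonic_le n hx) (abs_nonneg _) (by positivity)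

lemma abs_wzTerm_add_natCast_le (n k : ℕ) (hx : 0 < x) :
    |wzTerm n (x + k)| ≤ (1 / 2) ^ n * (4 * n + 1 / x ^ 2) * (1 / (x + k) ^ 2) := by
  refine (abs_wzTerm_le n (by positivity)).trans ?_
  gcongr
  simp

end Bounds

section Limits

variable {x : ℝ}

lemma summable_one_div_add_natCast_sq (x : ℝ) :
    Summable fun k : ℕ ↦ 1 / (x + k) ^ 2 := by
  refine ((Real.summable_one_div_nat_add_rpow x 2).2 one_lt_two).congr fun k ↦ ?_
  rw [Real.rpow_two, sq_abs, add_comm]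

lemma summable_wzTerm (n : ℕ) (hx : 0 < x) : Summable fun k : ℕ ↦ wzTerm n (x + k) :=
  .of_norm_bounded ((summable_one_div_add_natCast_sq x).mul_left _)
    fun k ↦ abs_wzTerm_add_natCast_le n k hx

lemma tendsto_tsum_wzTerm (hx : 0 < x) :
    Tendsto (fun n ↦ ∑' k : ℕ, wzTerm n (x + k)) atTop (𝓝 0) := by
  refine squeeze_zero_norm (fun n ↦ tsum_of_norm_bounded
    ((summable_one_div_add_natCast_sq x).hasSum.mul_left _)
    fun k ↦ abs_wzTerm_add_natCast_le n k hx) ?_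
  have h_geom := tendsto_pow_atTop_nhds_zero_of_lt_one (r := (1 / 2 : ℝ)) (by simp) (by norm_num)
  have h_arith_geom :=
    tendsto_self_mul_const_pow_of_lt_one (r := (1 / 2 : ℝ)) (by simp) (by norm_num)
  have h_coeff : Tendsto (fun n : ℕ ↦ (1 / 2 : ℝ) ^ n * (4 * n + 1 / x ^ 2)) atTop (𝓝 0) := by
    have h := (h_arith_geom.const_mul 4).add (h_geom.mul_const (1 / x ^ 2))
    rw [mul_zero, zero_mul, add_zero] at h
    exact h.congr fun n ↦ by ring
  simpa only [zero_mul] using h_coeff.mul_const _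

lemma tendsto_wzMate_atTop (n : ℕ) : Tendsto (wzMate n) atTop (𝓝 0) := by
  let bound (u : ℝ) : ℝ :=
    (1 / 2) ^ n / (2 * (2 * n + 1)) * (4 * n + u ^ 2) * (2 * u + (3 * n + 1) * u ^ 2)
  have h_bound : Tendsto (fun y : ℝ ↦ bound y⁻¹) atTop (𝓝 0) :=
    ((by fun_prop : Continuous bound).tendsto' 0 0 (by simp [bound])).comp tendsto_inv_atTop_zero
  refine squeeze_zero_norm' ?_ h_bound
  filter_upwards [eventually_gt_atTop 0] with y hy
  have h_coeff : 0 ≤ (2 * y + 3 * n + 1) / (2 * (2 * n + 1)) := by positivity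
  calc ‖wzMate n y‖ = (2 * y + 3 * n + 1) / (2 * (2 * n + 1)) * |wzTerm n y| := by
        rw [wzMate, Real.norm_eq_abs, abs_mul, abs_of_nonneg h_coeff]
    _ ≤ (2 * y + 3 * n + 1) / (2 * (2 * n + 1)) *
          ((1 / 2) ^ n * (4 * n + 1 / y ^ 2) * (1 / y ^ 2)) := by
        gcongr
        exact abs_wzTerm_le n hy
    _ = bound y⁻¹ := by
        simp only [bound]
        field_simp
        ring

end Limits

theorem stmt_3_general {x : ℝ} (hx : 0 < x) :
    Tendsto (fun N ↦ ∑ n ∈ range N, (2 * x + 3 * n + 1) / (2 * (2 * n + 1)) *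
      ((n ! : ℝ) ^ 2 / (n.centralBinom * (ascPochhammer ℝ (n + 1)).eval x ^ 2) *
        (∑ j ∈ range (n + 1), 1 / (x + j) ^ 2 - 4 * H 2 n)))
      atTop (𝓝 (∑' k : ℕ, 1 / (x + k) ^ 4)) := by
  have h_wz (n k : ℕ) : wzTerm n (x + k) - wzTerm (n + 1) (x + k) =
      wzMate n (x + k) - wzMate n (x + (k + 1 : ℕ)) := by
    rw [wzTerm_sub_wzTerm_succ n (by positivity), Nat.cast_succ, add_assoc]
  have h_mate (n : ℕ) : Tendsto (fun k : ℕ ↦ wzMate n (x + k)) atTop (𝓝 0) :=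
    (tendsto_wzMate_atTop n).comp (tendsto_atTop_add_const_left _ x tendsto_natCast_atTop_atTop)
  have h := tendsto_sum_of_wz_pair h_wz
    (fun n ↦ (summable_wzTerm n hx).hasSum.tendsto_sum_nat) h_mate (tendsto_tsum_wzTerm hx)
  simp only [wzTerm_zero, Nat.cast_zero, add_zero] at h
  exact h

section OneHalf

lemma hasSum_one_div_odd_pow_four :
    HasSum (fun k : ℕ ↦ 1 / (2 * (k : ℝ) + 1) ^ 4) (Real.pi ^ 4 / 96) := by
  let f (n : ℕ) : ℝ := 1 / (n : ℝ) ^ 4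
  have h_even : HasSum (fun k ↦ f (2 * k)) (1 / 16 * (Real.pi ^ 4 / 90)) := by
    refine (hasSum_zeta_four.mul_left (1 / 16)).congr_fun fun k ↦ ?_
    simp only [f]
    push_cast
    ring
  have h_odd : Summable fun k ↦ f (2 * k + 1) :=
    hasSum_zeta_four.summable.comp_injective fun a b hab ↦ by simpa using hab
  have h_total := (h_even.even_add_odd h_odd.hasSum).unique hasSum_zeta_four
  have h_value : ∑' k, f (2 * k + 1) = Real.pi ^ 4 / 96 := by linarith
  refine (h_value ▸ h_odd.hasSum :).congr_fun fun k ↦ ?_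
  simp only [f, Nat.cast_add, Nat.cast_mul, Nat.cast_ofNat, Nat.cast_one]

lemma tsum_one_div_half_add_pow_four :
    ∑' k : ℕ, 1 / ((1 / 2 : ℝ) + k) ^ 4 = Real.pi ^ 4 / 6 := by
  have h_scale (k : ℕ) : 1 / ((1 / 2 : ℝ) + k) ^ 4 = 16 * (1 / (2 * (k : ℝ) + 1) ^ 4) := by
    field_simp
    ring
  simp only [h_scale, tsum_mul_left, hasSum_one_div_odd_pow_four.tsum_eq]
  ring

lemma ascPochhammer_eval_half {K : Type*} [Field K] [CharZero K] (n : ℕ) :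
    (ascPochhammer K n).eval (1 / 2) = n ! * n.centralBinom / 4 ^ n := by
  induction n with
  | zero => simp
  | succ n ih =>
    have h_ne : (n : K) + 1 ≠ 0 := n.cast_add_one_ne_zero
    rw [ascPochhammer_succ_eval, ih, cast_centralBinom_succ, Nat.factorial_succ]
    push_cast
    field_simp
    ring

lemma wzWeight_half (n : ℕ) :
    wzWeight n (1 / 2) =
      2 * (2 * n + 1) * 16 ^ (n + 1) / ((n + 1) ^ 3 * ((n + 1).centralBinom : ℝ) ^ 3) := by
  have h_pos : (0 : ℝ) < n.centralBinom := mod_cast n.centralBinom_pos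
  rw [wzWeight, ascPochhammer_eval_half, cast_centralBinom_succ, Nat.factorial_succ,
    show (16 : ℝ) = 4 ^ 2 by norm_num, pow_right_comm]
  push_cast
  field_simp

lemma wzHarmonic_half (n : ℕ) :
    wzHarmonic n (1 / 2) = 4 * (H 2 (2 * n + 1) - 5 / 4 * H 2 n) := by
  induction n with
  | zero => norm_num [wzHarmonic, H]
  | succ n ih =>
    rw [wzHarmonic_succ, ih, show 2 * (n + 1) + 1 = 2 * n + 1 + 1 + 1 by ring,
      H_succ 2 (2 * n + 1 + 1), H_succ 2 (2 * n + 1), H_succ 2 n]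
    push_cast
    field_simp
    ring

lemma wzMate_half (n : ℕ) :
    wzMate n (1 / 2) =
      4 * (((3 * ((n:ℝ)+1) - 1) * 16^(n+1)) / (((n:ℝ)+1)^3 * ((2*(n+1)).choose (n+1) : ℝ)^3) *
        (H 2 (2*n+1) - 5/4 * H 2 n)) := by
  rw [wzMate, wzTerm, wzWeight_half, wzHarmonic_half, Nat.centralBinom_eq_two_mul_choose]
  field_simp
  ring

end OneHalf

theorem stmt_3 :
    Tendsto (fun N => ∑ n ∈ Finset.range N,
      ((3 * ((n:ℝ)+1) - 1) * 16^(n+1)) / (((n:ℝ)+1)^3 * ((2*(n+1)).choose (n+1) : ℝ)^3) *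
        (H 2 (2*n+1) - 5/4 * H 2 n))
      atTop (𝓝 (Real.pi^4 / 24)) := by
  have h : Tendsto (fun N ↦ ∑ n ∈ range N, wzMate n (1 / 2)) atTop (𝓝 (Real.pi ^ 4 / 6)) :=
    tsum_one_div_half_add_pow_four ▸ stmt_3_general one_half_pos
  simp only [wzMate_half, ← mul_sum] at h
  convert h.const_mul (1 / 4) using 2 <;> ring
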